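/- arXiv:1306.6854 — 4 statements merged into one kernel-verified Lean document; each statement's English description precedes it below -/
import Mathlib

section
/- Fix n ≥ 1, vectors I₀, I₁ ∈ ℝⁿ and σ > 0. Let u : ℝ × ℝ → M_n(ℝ), (ε,t) ↦ u^ε_t, be C¹ and g : ℝ × ℝ → M_n(ℝ) be C² with ∂_t g^ε_t = u^ε_t · g^ε_t, g^ε_0 = Id, and each g^ε_t invertible. Define E(ε) = ½ ∫₀¹ ‖u^ε_t‖²_F dt + (1/(2σ²)) ‖g^ε_1 I₀ − I₁‖². Set π = σ⁻² (g^0_1 I₀ − I₁) ∈ ℝⁿ and δu_t = ∂_ε|_{ε=0} u^ε_t. Then dE/dε|_{ε=0} = ∫₀¹ ⟨ u^0_t + ( (g^0_1 (g^0_t)⁻¹)ᵀ π ) (g^0_t I₀)ᵀ , δu_t ⟩_F dt, where a bᵀ ∈ M_n(ℝ) denotes the outer product of column vectors a, b ∈ ℝⁿ. -/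
open Matrix intervalIntegral

attribute [local instance] Matrix.normedAddCommGroup Matrix.normedSpace

lemma mat_hasDerivAt {n : ℕ} {f : ℝ → Matrix (Fin n) (Fin n) ℝ} {f' : Matrix (Fin n) (Fin n) ℝ}
    {x : ℝ} : HasDerivAt f f' x ↔ ∀ i j, HasDerivAt (fun x => f x i j) (f' i j) x := by
  have h1 : HasDerivAt f f' x ↔ ∀ i, HasDerivAt (fun x => f x i) (f' i) x :=
    hasDerivAt_pi (E' := fun _ : Fin n => Fin n → ℝ) (φ := f) (φ' := f')
  rw [h1]
  exact forall_congr' fun i => hasDerivAt_pi (φ := fun x => f x i) (φ' := f' i)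

lemma mat_contDiff {n : ℕ} {k : WithTop ℕ∞} {f : ℝ × ℝ → Matrix (Fin n) (Fin n) ℝ}
    (h : ContDiff ℝ k f) (i j : Fin n) : ContDiff ℝ k (fun p => f p i j) := by
  have h1 : ContDiff ℝ k (fun p => f p i) :=
    (contDiff_pi (F' := fun _ : Fin n => Fin n → ℝ) (Φ := f)).1 h i
  exact contDiff_pi.1 h1 j

lemma mat_mul_hasDerivAt {n : ℕ} {f g : ℝ → Matrix (Fin n) (Fin n) ℝ}
    {f' g' : Matrix (Fin n) (Fin n) ℝ} {x : ℝ} (hf : HasDerivAt f f' x) (hg : HasDerivAt g g' x) :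
    HasDerivAt (fun x => f x * g x) (f' * g x + f x * g') x := by
  rw [mat_hasDerivAt] at *
  intro i j
  simp only [Matrix.add_apply, Matrix.mul_apply, ← Finset.sum_add_distrib]
  exact HasDerivAt.fun_sum fun k _ => (hf i k).mul (hg k j)

lemma mat_inv_differentiable {n : ℕ} {f : ℝ → Matrix (Fin n) (Fin n) ℝ}
    (hf : ∀ x, ∃ f', HasDerivAt f f' x) (hu : ∀ x, IsUnit (f x)) (x : ℝ) :
    ∃ h', HasDerivAt (fun x => (f x)⁻¹) h' x := by
  have hd : ∀ M : ℝ → Matrix (Fin n) (Fin n) ℝ, (∀ i j, Differentiable ℝ fun x => M x i j) →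
      Differentiable ℝ fun x => (M x).det := by
    intro M hM
    simp only [Matrix.det_apply]
    refine Differentiable.fun_sum fun s _ => ?_
    refine Differentiable.const_smul (c := ((Equiv.Perm.sign s : ℤˣ) : ℤˣ)) ?_ 
    exact Differentiable.fun_finsetProd fun i _ => hM _ _
  have hfd : ∀ i j, Differentiable ℝ fun x => f x i j := fun i j x => by
    obtain ⟨f', h⟩ := hf x
    exact (mat_hasDerivAt.1 h i j).differentiableAt
  have key : ∀ i j, Differentiable ℝ fun x => (f x)⁻¹ i j := by
    intro i j
    have : (fun x => (f x)⁻¹ i j) = fun x => ((f x).det)⁻¹ * ((f x).updateRow j (Pi.single i 1)).det := by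
      ext x
      rw [Matrix.inv_def, Matrix.smul_apply, Matrix.adjugate_apply, Ring.inverse_eq_inv', smul_eq_mul]
    rw [this]
    refine Differentiable.mul (Differentiable.inv (hd _ hfd) fun x => ?_) (hd _ fun a b => ?_)
    · exact ((Matrix.isUnit_iff_isUnit_det _).1 (hu x)).ne_zero
    · by_cases h : a = j
      · subst h; simp
      · simpa [Matrix.updateRow_apply, h] using hfd a b
  exact ⟨Matrix.of fun i j => deriv (fun x => (f x)⁻¹ i j) x,
    mat_hasDerivAt.2 fun i j => (key i j x).hasDerivAt⟩

lemma mat_inv_hasDerivAt {n : ℕ} {f : ℝ → Matrix (Fin n) (Fin n) ℝ}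
    {f' : ℝ → Matrix (Fin n) (Fin n) ℝ}
    (hf : ∀ x, HasDerivAt f (f' x) x) (hu : ∀ x, IsUnit (f x)) (x : ℝ) :
    HasDerivAt (fun x => (f x)⁻¹) (-((f x)⁻¹ * f' x * (f x)⁻¹)) x := by
  obtain ⟨h', hh⟩ := mat_inv_differentiable (fun x => ⟨_, hf x⟩) hu x
  have hdet := fun x => (Matrix.isUnit_iff_isUnit_det _).1 (hu x)
  have h1 := mat_mul_hasDerivAt hh (hf x)
  have h2 : (fun x => (f x)⁻¹ * f x) = fun _ => 1 := by
    ext1 x; exact Matrix.nonsing_inv_mul _ (hdet x)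
  rw [h2] at h1
  have h3 : h' * f x + (f x)⁻¹ * f' x = 0 := h1.unique (hasDerivAt_const _ _)
  have h4 : h' = -((f x)⁻¹ * f' x * (f x)⁻¹) := by
    have := congrArg (· * (f x)⁻¹) h3
    simp only [add_mul, zero_mul, Matrix.mul_assoc, Matrix.mul_nonsing_inv _ (hdet x), mul_one] at this
    rw [eq_neg_iff_add_eq_zero, Matrix.mul_assoc]; exact this
  rw [← h4]; exact hh

lemma param_int {F : ℝ → ℝ → ℝ} (hF : ContDiff ℝ 1 (fun p : ℝ × ℝ => F p.1 p.2)) :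
    (∀ t, DifferentiableAt ℝ (fun ε => F ε t) 0) ∧ Continuous (fun t => deriv (fun ε => F ε t) 0) ∧
    ∀ a b, HasDerivAt (fun ε => ∫ t in a..b, F ε t) (∫ t in a..b, deriv (fun ε => F ε t) 0) 0 := by
  set D : ℝ × ℝ → ℝ := fun p => fderiv ℝ (fun p : ℝ × ℝ => F p.1 p.2) p (1, 0) with hD
  have hDc : Continuous D := (hF.continuous_fderiv one_ne_zero).clm_apply continuous_const
  have hder : ∀ ε t, HasDerivAt (fun ε => F ε t) (D (ε, t)) ε := by
    intro ε t
    have h1 := (hF.differentiable one_ne_zero (ε, t)).hasFDerivAt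
    have h2 : HasDerivAt (fun ε : ℝ => (ε, t)) ((1:ℝ), (0:ℝ)) ε :=
      (hasDerivAt_id ε).prodMk (hasDerivAt_const ε t)
    exact h1.comp_hasDerivAt ε h2
  have hd0 : (fun t => deriv (fun ε => F ε t) 0) = fun t => D (0, t) := by
    ext t; exact (hder 0 t).deriv
  refine ⟨fun t => (hder 0 t).differentiableAt, ?_, fun a b => ?_⟩
  · rw [hd0]; fun_prop
  rw [hd0]
  obtain ⟨C, hC⟩ := ((isCompact_Icc (a := (-1:ℝ)) (b := 1)).prod
    (isCompact_uIcc (a := a) (b := b))).exists_bound_of_continuousOn hDc.continuousOn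
  have hFc : ∀ ε, Continuous (F ε) := fun ε =>
    hF.continuous.comp (Continuous.prodMk continuous_const continuous_id)
  refine (intervalIntegral.hasDerivAt_integral_of_dominated_loc_of_deriv_le (F' := fun ε t => D (ε, t))
    (bound := fun _ => C) (Icc_mem_nhds (a := (-1:ℝ)) (b := 1) (by norm_num) (by norm_num))
    (Filter.Eventually.of_forall fun ε => (hFc ε).aestronglyMeasurable)
    ((hFc 0).intervalIntegrable _ _) ?_ ?_ ?_ ?_).2
  · exact Continuous.aestronglyMeasurable (by fun_prop)
  · exact Filter.Eventually.of_forall fun t ht ε hε =>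
      hC (ε, t) ⟨hε, Set.uIoc_subset_uIcc ht⟩
  · exact intervalIntegrable_const
  · exact Filter.Eventually.of_forall fun t ht ε hε => hder ε t

lemma dot_mat_hasDerivAt {n : ℕ} {f : ℝ → Matrix (Fin n) (Fin n) ℝ}
    {f' : Matrix (Fin n) (Fin n) ℝ} {x : ℝ} (v w : Fin n → ℝ) (hf : HasDerivAt f f' x) :
    HasDerivAt (fun x => v ⬝ᵥ (f x *ᵥ w)) (v ⬝ᵥ (f' *ᵥ w)) x := by
  rw [mat_hasDerivAt] at hf
  simp only [dotProduct, mulVec]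
  exact HasDerivAt.fun_sum fun i _ => (HasDerivAt.fun_sum fun j _ =>
    (hf i j).mul_const (w j)).const_mul (v i)

/-- Derivative of the LDDMM matching energy for `G = GL(n,ℝ)` acting on `V = ℝⁿ`:
`DE(u)(t) = u_t + ((g₁ g_t⁻¹)ᵀ π)(g_t I₀)ᵀ` with `π = σ⁻²(g₁ I₀ − I₁)`, paired with the
variation `δu_t` in the Frobenius inner product `⟨A,B⟩_F = tr(AᵀB)`. -/
theorem deriv_matching_energy {n : ℕ} (hn : 1 ≤ n)
    (I₀ I₁ : Fin n → ℝ) (σ : ℝ) (hσ : 0 < σ)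
    (u g : ℝ → ℝ → Matrix (Fin n) (Fin n) ℝ)
    (hu : ContDiff ℝ 1 (fun p : ℝ × ℝ => u p.1 p.2))
    (hg : ContDiff ℝ 2 (fun p : ℝ × ℝ => g p.1 p.2))
    (hflow : ∀ ε t : ℝ, HasDerivAt (fun s => g ε s) (u ε t * g ε t) t)
    (hinit : ∀ ε : ℝ, g ε 0 = 1)
    (hinv : ∀ ε t : ℝ, IsUnit (g ε t))
    (π : Fin n → ℝ) (hπ : π = (σ ^ 2)⁻¹ • (g 0 1 *ᵥ I₀ - I₁)) :
    deriv (fun ε =>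
        (1 / 2) * (∫ t in (0:ℝ)..1, Matrix.trace ((u ε t)ᵀ * u ε t)) +
          (1 / (2 * σ ^ 2)) * ∑ i, ((g ε 1 *ᵥ I₀ - I₁) i) ^ 2) 0 =
      ∫ t in (0:ℝ)..1,
        Matrix.trace
          ((u 0 t + vecMulVec ((g 0 1 * (g 0 t)⁻¹)ᵀ *ᵥ π) (g 0 t *ᵥ I₀))ᵀ *
            deriv (fun ε => u ε t) 0) := by
  have hg1 : ContDiff ℝ 1 (fun p : ℝ × ℝ => g p.1 p.2) := hg.of_le (by norm_num)
  have pu := fun i j => param_int (F := fun ε t => u ε t i j) (mat_contDiff hu i j)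
  have pg := fun i j => param_int (F := fun ε t => g ε t i j) (mat_contDiff hg1 i j)
  obtain ⟨δu, hδu⟩ : ∃ δu : ℝ → Matrix (Fin n) (Fin n) ℝ,
      ∀ t i j, δu t i j = deriv (fun ε => u ε t i j) 0 := ⟨fun t => Matrix.of fun i j => _, fun _ _ _ => rfl⟩
  obtain ⟨δg, hδg⟩ : ∃ δg : ℝ → Matrix (Fin n) (Fin n) ℝ,
      ∀ t i j, δg t i j = deriv (fun ε => g ε t i j) 0 := ⟨fun t => Matrix.of fun i j => _, fun _ _ _ => rfl⟩
  have du : ∀ t, HasDerivAt (fun ε => u ε t) (δu t) 0 := fun t => mat_hasDerivAt.2 fun i j => by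
    rw [hδu]; exact ((pu i j).1 t).hasDerivAt
  have dg : ∀ t, HasDerivAt (fun ε => g ε t) (δg t) 0 := fun t => mat_hasDerivAt.2 fun i j => by
    rw [hδg]; exact ((pg i j).1 t).hasDerivAt
  have hdu : ∀ t, deriv (fun ε => u ε t) 0 = δu t := fun t => (du t).deriv
  simp only [hdu]
  have cδu : Continuous δu := continuous_matrix fun i j => by
    simp only [hδu]; exact (pu i j).2.1
  have cu0 : Continuous (u 0) := hu.continuous.comp (Continuous.prodMk continuous_const continuous_id)
  have cg0 : Continuous (g 0) := hg.continuous.comp (Continuous.prodMk continuous_const continuous_id)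
  have cinv : Continuous fun t => (g 0 t)⁻¹ := by
    refine continuous_iff_continuousAt.2 fun t => ?_
    exact (mat_inv_hasDerivAt (hflow 0) (hinv 0) t).continuousAt
  -- variation of the flow
  have dδg : ∀ t, HasDerivAt δg (δu t * g 0 t + u 0 t * δg t) t := by
    intro t
    refine mat_hasDerivAt.2 fun i j => ?_
    have hP : ContDiff ℝ 1 (fun p : ℝ × ℝ => (u p.1 p.2 * g p.1 p.2) i j) := by
      simp only [Matrix.mul_apply]
      exact ContDiff.sum fun k _ => (mat_contDiff hu i k).mul (mat_contDiff hg1 k j)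
    have pP := param_int (F := fun ε t => (u ε t * g ε t) i j) hP
    have hPd : ∀ s, deriv (fun ε => (u ε s * g ε s) i j) 0 = (δu s * g 0 s + u 0 s * δg s) i j :=
      fun s => (mat_hasDerivAt.1 (mat_mul_hasDerivAt (du s) (dg s)) i j).deriv
    have hint : ∀ ε s, g ε s i j = (∫ r in (0:ℝ)..s, (u ε r * g ε r) i j) + (1 : Matrix (Fin n) (Fin n) ℝ) i j := by
      intro ε s
      rw [intervalIntegral.integral_eq_sub_of_hasDerivAt (f := fun r => g ε r i j)
        (fun r _ => mat_hasDerivAt.1 (hflow ε r) i j), hinit]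
      · ring
      · exact (hP.continuous.comp (Continuous.prodMk continuous_const continuous_id)).intervalIntegrable _ _
    have h1 : (fun s => δg s i j) = fun s => ∫ r in (0:ℝ)..s, deriv (fun ε => (u ε r * g ε r) i j) 0 := by
      ext s
      rw [hδg]
      simp only [hint _ s]
      exact ((pP.2.2 0 s).add_const _).deriv
    rw [h1, ← hPd t]
    exact intervalIntegral.integral_hasDerivAt_right (pP.2.1.intervalIntegrable _ _)
      (pP.2.1.stronglyMeasurableAtFilter _ _) pP.2.1.continuousAt
  have δg0 : δg 0 = 0 := by
    have h := dg 0
    simp only [hinit] at h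
    exact h.unique (hasDerivAt_const _ _)
  have hdet := fun t => (Matrix.isUnit_iff_isUnit_det _).1 (hinv 0 t)
  have dφ : ∀ t, HasDerivAt (fun t => π ⬝ᵥ ((g 0 1 * ((g 0 t)⁻¹ * δg t)) *ᵥ I₀))
      (π ⬝ᵥ ((g 0 1 * ((g 0 t)⁻¹ * δu t * g 0 t)) *ᵥ I₀)) t := by
    intro t
    refine dot_mat_hasDerivAt _ _ ?_
    have h := mat_mul_hasDerivAt (hasDerivAt_const t (g 0 1))
      (mat_mul_hasDerivAt (mat_inv_hasDerivAt (hflow 0) (hinv 0) t) (dδg t))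
    convert h using 1
    have h5 : (g 0 t)⁻¹ * (u 0 t * g 0 t) * (g 0 t)⁻¹ = (g 0 t)⁻¹ * u 0 t := by
      rw [Matrix.mul_assoc, Matrix.mul_assoc, Matrix.mul_nonsing_inv _ (hdet t), mul_one]
    rw [h5]
    noncomm_ring
  have cψ : Continuous fun t => π ⬝ᵥ ((g 0 1 * ((g 0 t)⁻¹ * δu t * g 0 t)) *ᵥ I₀) := by
    fun_prop
  have hφ : ∫ t in (0:ℝ)..1, π ⬝ᵥ ((g 0 1 * ((g 0 t)⁻¹ * δu t * g 0 t)) *ᵥ I₀) =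
      π ⬝ᵥ (δg 1 *ᵥ I₀) := by
    rw [intervalIntegral.integral_eq_sub_of_hasDerivAt (fun t _ => dφ t)
      (cψ.intervalIntegrable _ _), δg0, ← Matrix.mul_assoc, Matrix.mul_nonsing_inv _ (hdet 1)]
    simp
  -- the energy
  have hQ : ContDiff ℝ 1 (fun p : ℝ × ℝ => Matrix.trace ((u p.1 p.2)ᵀ * u p.1 p.2)) := by
    simp only [Matrix.trace, Matrix.diag_apply, Matrix.mul_apply, Matrix.transpose_apply]
    exact ContDiff.sum fun i _ => ContDiff.sum fun k _ => (mat_contDiff hu k i).mul (mat_contDiff hu k i)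
  have pQ := param_int (F := fun ε t => Matrix.trace ((u ε t)ᵀ * u ε t)) hQ
  have hQd : ∀ t, deriv (fun ε => Matrix.trace ((u ε t)ᵀ * u ε t)) 0 =
      2 * Matrix.trace ((u 0 t)ᵀ * δu t) := by
    intro t
    refine HasDerivAt.deriv ?_
    simp only [Matrix.trace, Matrix.diag_apply, Matrix.mul_apply, Matrix.transpose_apply, Finset.mul_sum]
    refine HasDerivAt.fun_sum fun i _ => HasDerivAt.fun_sum fun k _ => ?_
    have h := mat_hasDerivAt.1 (du t) k i
    exact (h.fun_mul h).congr_deriv (by ring)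
  have hE1 := (pQ.2.2 0 1).const_mul (1 / 2 : ℝ)
  simp only [hQd] at hE1
  have hE2 : HasDerivAt (fun ε => (1 / (2 * σ ^ 2)) * ∑ i, ((g ε 1 *ᵥ I₀ - I₁) i) ^ 2)
      (π ⬝ᵥ (δg 1 *ᵥ I₀)) 0 := by
    have hi : ∀ i, HasDerivAt (fun ε => (g ε 1 *ᵥ I₀ - I₁) i) ((δg 1 *ᵥ I₀) i) 0 := by
      intro i
      have h := (dot_mat_hasDerivAt (Pi.single i 1) I₀ (dg 1)).sub_const (I₁ i)
      simpa [single_dotProduct] using h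
    have h := (HasDerivAt.fun_sum (u := Finset.univ) fun i _ => (hi i).fun_pow 2).const_mul (1 / (2 * σ ^ 2))
    refine h.congr_deriv (Eq.symm ?_)
    rw [hπ, Finset.mul_sum, dotProduct]
    refine Finset.sum_congr rfl fun i _ => ?_
    simp only [Pi.smul_apply, smul_eq_mul]
    field_simp
    norm_num
    ring
  rw [(hE1.fun_add hE2).deriv, ← hφ, ← intervalIntegral.integral_const_mul,
    ← intervalIntegral.integral_add]
  · refine intervalIntegral.integral_congr fun t _ => ?_
    simp only [Matrix.transpose_add, add_mul, Matrix.trace_add]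
    congr 1
    · ring
    · rw [Matrix.transpose_vecMulVec, Matrix.vecMulVec_mul, Matrix.trace_vecMulVec,
        dotProduct_comm (g 0 t *ᵥ I₀), ← Matrix.dotProduct_mulVec, Matrix.mulVec_transpose, ← Matrix.dotProduct_mulVec]
      simp only [Matrix.mulVec_mulVec, Matrix.mul_assoc]
  · refine Continuous.intervalIntegrable ?_ _ _
    fun_prop
  · exact cψ.intervalIntegrable _ _
end

section
/- Let n ≥ 1 and let u, g : ℝ → M_n(ℝ) be differentiable with ∂_t g_t = u_t · g_t, g_0 = Id, and each g_t invertible. Then the map t ↦ g_tᵀ · u_t · (g_tᵀ)⁻¹ is constant if and only if u satisfies ∂_t u_t = u_t u_tᵀ − u_tᵀ u_t for all t. -/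
theorem aux_alg {R : Type*} [Ring R] (G u v d H : R) :
    G * (d - (u * v - v * u)) * H = (G * v * u + G * d) * H + G * u * -(v * H) := by
  noncomm_ring

open Matrix

attribute [local instance] Matrix.normedAddCommGroup Matrix.normedSpace

theorem aux_mul {n : ℕ} {a b : ℝ → Matrix (Fin n) (Fin n) ℝ} {a' b' : Matrix (Fin n) (Fin n) ℝ}
    {t : ℝ} (ha : HasDerivAt a a' t) (hb : HasDerivAt b b' t) :
    HasDerivAt (fun s => a s * b s) (a' * b t + a t * b') t := by
  let := Matrix.linftyOpNormedRing (n := Fin n) (α := ℝ)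
  let := Matrix.linftyOpNormedAlgebra (n := Fin n) (R := ℝ) (α := ℝ)
  exact HasDerivAt.mul (𝔸 := Matrix (Fin n) (Fin n) ℝ) ha hb

theorem aux_inv_gen {R : Type*} [NormedRing R] [NormedAlgebra ℝ R] 
    (hfd : FiniteDimensional ℝ R)
    {a : ℝ → R} {a' : R} {t : ℝ} (ha : HasDerivAt a a' t) (hu : IsUnit (a t)) :
    HasDerivAt (fun s => Ring.inverse (a s)) (-(Ring.inverse (a t) * a' * Ring.inverse (a t))) t := by
  have : CompleteSpace R := FiniteDimensional.complete ℝ R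
  obtain ⟨x, hx⟩ := hu
  have h := hasFDerivAt_ringInverse (𝕜 := ℝ) x
  rw [hx] at h
  have := h.comp_hasDerivAt t ha
  rw [← hx, Ring.inverse_unit]
  simpa [Function.comp_def] using this

theorem aux_inv {n : ℕ} {a : ℝ → Matrix (Fin n) (Fin n) ℝ} {a' : Matrix (Fin n) (Fin n) ℝ}
    {t : ℝ} (ha : HasDerivAt a a' t) (hu : IsUnit (a t)) :
    HasDerivAt (fun s => (a s)⁻¹) (-((a t)⁻¹ * a' * (a t)⁻¹)) t := by
  simp only [Matrix.nonsing_inv_eq_ringInverse]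
  have hfd : FiniteDimensional ℝ (Matrix (Fin n) (Fin n) ℝ) := inferInstance
  let := Matrix.linftyOpNormedRing (n := Fin n) (α := ℝ)
  let := Matrix.linftyOpNormedAlgebra (n := Fin n) (R := ℝ) (α := ℝ)
  exact aux_inv_gen (R := Matrix (Fin n) (Fin n) ℝ) hfd ha hu

theorem aux_tr {n : ℕ} {a : ℝ → Matrix (Fin n) (Fin n) ℝ} {a' : Matrix (Fin n) (Fin n) ℝ}
    {t : ℝ} (ha : HasDerivAt a a' t) : HasDerivAt (fun s => (a s)ᵀ) a'ᵀ t :=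
  hasDerivAt_pi.2 fun i => hasDerivAt_pi.2 fun j => hasDerivAt_pi.1 (hasDerivAt_pi.1 ha j) i

/-- Conservation of momentum and the Euler–Poincaré equation for `G = GL(n,ℝ)` with the
Frobenius inner product: along a flow `∂ₜ g_t = u_t g_t`, `g_0 = 1`, the coadjoint-transported
momentum `Ad*_{g_t} u_t = g_tᵀ u_t (g_tᵀ)⁻¹` is constant in `t` if and only if `u` satisfies
the Euler–Poincaré equation `∂ₜ u_t = u_t u_tᵀ − u_tᵀ u_t`. -/
theorem conservation_iff_EulerPoincare {n : ℕ} (hn : 1 ≤ n)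
    (u g : ℝ → Matrix (Fin n) (Fin n) ℝ)
    (hu : Differentiable ℝ u) (hg : Differentiable ℝ g)
    (hflow : ∀ t : ℝ, HasDerivAt g (u t * g t) t)
    (hinit : g 0 = 1)
    (hinv : ∀ t : ℝ, IsUnit (g t)) :
    (∀ s t : ℝ, (g s)ᵀ * u s * ((g s)ᵀ)⁻¹ = (g t)ᵀ * u t * ((g t)ᵀ)⁻¹) ↔
      (∀ t : ℝ, deriv u t = u t * (u t)ᵀ - (u t)ᵀ * u t) := by
  have hT : ∀ t, IsUnit (g t)ᵀ := fun t => (Matrix.isUnit_transpose _).2 (hinv t)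
  have hD : ∀ t, IsUnit ((g t)ᵀ).det := fun t => (Matrix.isUnit_iff_isUnit_det _).1 (hT t)
  have key : ∀ t, HasDerivAt (fun s => (g s)ᵀ * u s * ((g s)ᵀ)⁻¹)
      ((g t)ᵀ * (deriv u t - (u t * (u t)ᵀ - (u t)ᵀ * u t)) * ((g t)ᵀ)⁻¹) t := by
    intro t
    have h1 := aux_tr (hflow t)
    have h2 := aux_mul (aux_mul h1 (hu t).hasDerivAt) (aux_inv h1 (hT t))
    convert h2 using 1
    have e : ((g t)ᵀ)⁻¹ * (u t * g t)ᵀ * ((g t)ᵀ)⁻¹ = (u t)ᵀ * ((g t)ᵀ)⁻¹ := by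
      rw [Matrix.transpose_mul, ← Matrix.mul_assoc, Matrix.nonsing_inv_mul _ (hD t), Matrix.one_mul]
    rw [e, Matrix.transpose_mul]
    exact aux_alg _ _ _ _ _
  constructor
  · intro h t
    have hc : HasDerivAt (fun s => (g s)ᵀ * u s * ((g s)ᵀ)⁻¹) 0 t := by
      rw [show (fun s => (g s)ᵀ * u s * ((g s)ᵀ)⁻¹) = fun _ => (g t)ᵀ * u t * ((g t)ᵀ)⁻¹ from
        funext fun s => h s t]
      exact hasDerivAt_const _ _
    have h0 := (key t).unique hc
    have hI : IsUnit ((g t)ᵀ)⁻¹ := (Matrix.isUnit_nonsing_inv_iff).2 (hT t)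
    rw [hI.mul_left_eq_zero, (hT t).mul_right_eq_zero] at h0
    exact sub_eq_zero.1 h0
  · intro h
    refine is_const_of_deriv_eq_zero (fun t => (key t).differentiableAt) fun t => ?_
    rw [(key t).deriv, h t, sub_self, Matrix.mul_zero, Matrix.zero_mul]
end

section
/- Let d ≥ 1 and let m, u, v : ℝ^d → ℝ^d be C¹ vector fields with compact support. Then ∫_{ℝ^d} ⟨m(x), Du(x)·v(x) − Dv(x)·u(x)⟩ dx = ∫_{ℝ^d} ⟨Du(x)ᵀ·m(x) + Dm(x)·u(x) + (div u)(x)·m(x), v(x)⟩ dx, where Du(x) denotes the total derivative (Jacobian) of u at x, Du(x)ᵀ its adjoint, and (div u)(x) = tr Du(x). -/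
open MeasureTheory
open scoped RealInnerProductSpace

/-- The coadjoint action `ad*` on the diffeomorphism group of `ℝ^d` under the `L²` pairing:
for compactly supported `C¹` vector fields `m, u, v`,
`∫ ⟨m, Du·v − Dv·u⟩ = ∫ ⟨Duᵀ·m + Dm·u + (div u)·m, v⟩`. -/
theorem coadjoint_action_integration_by_parts {d : ℕ} (hd : 1 ≤ d)
    (m u v : EuclideanSpace ℝ (Fin d) → EuclideanSpace ℝ (Fin d))
    (hm : ContDiff ℝ 1 m) (hu : ContDiff ℝ 1 u) (hv : ContDiff ℝ 1 v)
    (hms : HasCompactSupport m) (hus : HasCompactSupport u) (hvs : HasCompactSupport v) :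
    ∫ x, ⟪m x, fderiv ℝ u x (v x) - fderiv ℝ v x (u x)⟫ =
      ∫ x, ⟪ContinuousLinearMap.adjoint (fderiv ℝ u x) (m x) + fderiv ℝ m x (u x) +
        (LinearMap.trace ℝ (EuclideanSpace ℝ (Fin d))
          (fderiv ℝ u x : EuclideanSpace ℝ (Fin d) →ₗ[ℝ] EuclideanSpace ℝ (Fin d))) • m x,
        v x⟫ := by
  have hum : Continuous (fderiv ℝ u) := hu.continuous_fderiv one_ne_zero
  have hvm : Continuous (fderiv ℝ v) := hv.continuous_fderiv one_ne_zero
  have hmc := hm.continuous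
  have huc := hu.continuous
  have hvc := hv.continuous
  have hφ : ContDiff ℝ 1 (fun x => ⟪m x, v x⟫) := hm.inner ℝ hv
  have hφc : Continuous (fderiv ℝ (fun x => ⟪m x, v x⟫)) := hφ.continuous_fderiv one_ne_zero
  have hφs : HasCompactSupport (fun x => ⟪m x, v x⟫) :=
    hms.mono (fun x hx => by
      simp only [Function.mem_support] at hx ⊢
      intro h
      simp [h] at hx)
  have hui : ∀ i, ContDiff ℝ 1 (fun x => u x i) := fun i => by fun_prop
  have huic : ∀ i, Continuous (fderiv ℝ (fun x => u x i)) :=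
    fun i => (hui i).continuous_fderiv one_ne_zero
  have hdu : ∀ i x w, fderiv ℝ (fun x => u x i) x w = fderiv ℝ u x w i := by
    intro i x w
    have h1 : HasFDerivAt u (fderiv ℝ u x) x :=
      (hu.differentiable one_ne_zero x).hasFDerivAt
    have h2 := (EuclideanSpace.proj i : EuclideanSpace ℝ (Fin d) →L[ℝ] ℝ).hasFDerivAt.comp x h1
    have h3 : fderiv ℝ (fun x => u x i) x = _ := h2.fderiv
    rw [h3]; rfl
  let e : Fin d → EuclideanSpace ℝ (Fin d) := fun i => EuclideanSpace.single i 1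
  have I1 : ∀ i, Integrable (fun x => fderiv ℝ (fun x => ⟪m x, v x⟫) x (e i) * u x i) := by
    intro i
    refine Continuous.integrable_of_hasCompactSupport (by fun_prop) ?_
    refine hus.mono (fun x hx => ?_)
    simp only [Function.mem_support] at hx ⊢
    intro h
    simp [h] at hx
  have I2 : ∀ i, Integrable (fun x => ⟪m x, v x⟫ * fderiv ℝ (fun x => u x i) x (e i)) := by
    intro i
    have := huic i
    refine Continuous.integrable_of_hasCompactSupport (by fun_prop) ?_
    exact hφs.mul_right
  have I3 : ∀ i, Integrable (fun x => ⟪m x, v x⟫ * u x i) := by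
    intro i
    refine Continuous.integrable_of_hasCompactSupport (by fun_prop) ?_
    exact hφs.mul_right
  have P : ∀ i, ∫ x, (fderiv ℝ (fun x => ⟪m x, v x⟫) x (e i) * u x i +
      ⟪m x, v x⟫ * fderiv ℝ (fun x => u x i) x (e i)) = 0 := by
    intro i
    rw [integral_add (I1 i) (I2 i), integral_mul_fderiv_eq_neg_fderiv_mul_of_integrable
      (I1 i) (I2 i) (I3 i) (fun x _ => hφ.differentiable one_ne_zero x)
      (fun x _ => (hui i).differentiable one_ne_zero x)]
    ring
  have IL : Integrable (fun x => ⟪m x, fderiv ℝ u x (v x) - fderiv ℝ v x (u x)⟫) := by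
    refine Continuous.integrable_of_hasCompactSupport (by fun_prop) ?_
    refine hms.mono (fun x hx => ?_)
    simp only [Function.mem_support] at hx ⊢
    intro h
    simp [h] at hx
  have key : ∀ x, ⟪ContinuousLinearMap.adjoint (fderiv ℝ u x) (m x) + fderiv ℝ m x (u x) +
        (LinearMap.trace ℝ (EuclideanSpace ℝ (Fin d))
          (fderiv ℝ u x : EuclideanSpace ℝ (Fin d) →ₗ[ℝ] EuclideanSpace ℝ (Fin d))) • m x,
        v x⟫ = ⟪m x, fderiv ℝ u x (v x) - fderiv ℝ v x (u x)⟫ +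
      ∑ i, (fderiv ℝ (fun x => ⟪m x, v x⟫) x (e i) * u x i +
      ⟪m x, v x⟫ * fderiv ℝ (fun x => u x i) x (e i)) := by
    intro x
    have hs : ∑ i, fderiv ℝ (fun x => ⟪m x, v x⟫) x (e i) * u x i =
        ⟪m x, fderiv ℝ v x (u x)⟫ + ⟪fderiv ℝ m x (u x), v x⟫ := by
      rw [← fderiv_inner_apply ℝ (hm.differentiable one_ne_zero x)
        (hv.differentiable one_ne_zero x) (u x)]
      have hux : u x = ∑ i, u x i • e i := by
        have := (EuclideanSpace.basisFun (Fin d) ℝ).sum_repr (u x)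
        simpa [e] using this.symm
      conv_rhs => rw [hux, map_sum]
      simp [mul_comm]
    have ht : LinearMap.trace ℝ (EuclideanSpace ℝ (Fin d))
          (fderiv ℝ u x : EuclideanSpace ℝ (Fin d) →ₗ[ℝ] EuclideanSpace ℝ (Fin d)) =
        ∑ i, fderiv ℝ (fun x => u x i) x (e i) := by
      rw [LinearMap.trace_eq_sum_inner _ (EuclideanSpace.basisFun (Fin d) ℝ)]
      refine Finset.sum_congr rfl fun i _ => ?_
      rw [hdu]
      simp [e, EuclideanSpace.inner_single_left]
    rw [Finset.sum_add_distrib, hs, ← Finset.mul_sum, ← ht, inner_add_left, inner_add_left,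
      inner_sub_right, ContinuousLinearMap.adjoint_inner_left, real_inner_smul_left]
    ring
  have I4 : ∀ i, Integrable (fun x => fderiv ℝ (fun x => ⟪m x, v x⟫) x (e i) * u x i +
      ⟪m x, v x⟫ * fderiv ℝ (fun x => u x i) x (e i)) := fun i => (I1 i).add (I2 i)
  simp_rw [key]
  rw [integral_add IL (integrable_finsetSum _ fun i _ => I4 i),
    integral_finsetSum _ fun i _ => I4 i]
  simp only [P, Finset.sum_const_zero, add_zero]
end

section
/- Let d ≥ 1, let H be a real Hilbert space, ι : H → (ℝ^d → ℝ^d) an injective linear map, and C > 0 a constant such that for every h ∈ H the vector field ι(h) is C¹ and sup_x ( ‖ι(h)(x)‖ + ‖D(ι h)(x)‖ ) ≤ C‖h‖_H. For a measurable u : [0,1] → H with ∫₀¹‖u_t‖²_H dt < ∞, let φ^u be its flow, i.e. the unique map with φ^u_t(x) = x + ∫₀ᵗ ι(u_s)(φ^u_s(x)) ds for t ∈ [0,1], and recall each φ^u_t is a bijection. Then for any two such u and v there exists a measurable w : [0,1] → H with ∫₀¹‖w_t‖²_H dt < ∞ such that φ^w_1 = φ^u_1 ∘ φ^v_1, and there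 exists a measurable w' : [0,1] → H with ∫₀¹‖w'_t‖²_H dt < ∞ such that φ^{w'}_1 = (φ^u_1)⁻¹. In other words, the set G_H = { φ^u_1 : u measurable, ∫₀¹‖u_t‖²_H dt < ∞ } is closed under composition and inversion, hence a group of bijections of ℝ^d. -/
open MeasureTheory intervalIntegral

lemma aux_gronwall (f g : ℝ → ℝ) (hg0 : ∀ t, 0 ≤ g t)
    (hf0 : ∀ t, 0 ≤ f t)
    (hg : IntervalIntegrable g volume 0 1)
    (hgf : IntervalIntegrable (fun s => g s * f s) volume 0 1)
    (h : ∀ t ∈ Set.Icc (0:ℝ) 1, f t ≤ ∫ s in (0:ℝ)..t, g s * f s) :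
    ∀ t ∈ Set.Icc (0:ℝ) 1, f t = 0 := by
  have sub : ∀ {k : ℝ → ℝ}, IntervalIntegrable k volume 0 1 → ∀ a ∈ Set.Icc (0:ℝ) 1,
      ∀ b ∈ Set.Icc (0:ℝ) 1, IntervalIntegrable k volume a b := by
    intro k hk a ha b hb
    apply hk.mono_set
    rw [Set.uIcc_of_le zero_le_one]
    exact Set.uIcc_subset_Icc ha hb
  have z : (0:ℝ) ∈ Set.Icc (0:ℝ) 1 := by simp
  have cont : ∀ {k : ℝ → ℝ}, IntervalIntegrable k volume 0 1 →
      ContinuousOn (fun t => ∫ s in (0:ℝ)..t, k s) (Set.Icc 0 1) := by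
    intro k hk
    have := intervalIntegral.continuousOn_primitive_interval' hk (a := 0) (by simp)
    rwa [Set.uIcc_of_le zero_le_one] at this
  have mono : ∀ {k : ℝ → ℝ}, IntervalIntegrable k volume 0 1 → (∀ t, 0 ≤ k t) →
      ∀ a ∈ Set.Icc (0:ℝ) 1, ∀ b ∈ Set.Icc (0:ℝ) 1, a ≤ b →
      (∫ s in (0:ℝ)..a, k s) ≤ ∫ s in (0:ℝ)..b, k s := by
    intro k hk hk0 a ha b hb hab
    have := intervalIntegral.integral_add_adjacent_intervals (sub hk 0 z a ha) (sub hk a ha b hb)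
    have h2 : 0 ≤ ∫ s in a..b, k s := intervalIntegral.integral_nonneg hab (fun t _ => hk0 t)
    linarith
  have gf0 : ∀ t, 0 ≤ g t * f t := fun t => mul_nonneg (hg0 t) (hf0 t)
  have key : Set.Icc (0:ℝ) 1 ⊆ {t | (∫ s in (0:ℝ)..t, g s * f s) = 0} := by
    apply IsClosed.Icc_subset_of_forall_exists_gt
    · rw [Set.inter_comm]
      exact (cont hgf).preimage_isClosed_of_isClosed isClosed_Icc (isClosed_singleton (x := 0))
    · simp
    · rintro x ⟨hx, hx1⟩ y hy
      have hxI : x ∈ Set.Icc (0:ℝ) 1 := ⟨hx1.1, hx1.2.le⟩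
      have hx : (∫ s in (0:ℝ)..x, g s * f s) = 0 := hx
      have hc := (cont hg) x hxI
      rw [Metric.continuousWithinAt_iff] at hc
      obtain ⟨δ, hδ, hc⟩ := hc (1/2) (by norm_num)
      have hy : x < y := hy
      obtain ⟨t, hxt, ht⟩ : ∃ t, x < t ∧ t < min (min y 1) (x + δ) :=
        exists_between (by simp [hy, hx1.2, hδ])
      simp only [lt_min_iff] at ht
      have htI : t ∈ Set.Icc (0:ℝ) 1 := ⟨hx1.1.trans hxt.le, ht.1.2.le⟩
      refine ⟨t, ?_, hxt, ht.1.1.le⟩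
      have h1 := hc htI (by rw [Real.dist_eq, abs_of_pos (by linarith)]; linarith)
      have h2 := intervalIntegral.integral_add_adjacent_intervals (sub hg 0 z x hxI)
        (sub hg x hxI t htI)
      have h3 := intervalIntegral.integral_add_adjacent_intervals (sub hgf 0 z x hxI)
        (sub hgf x hxI t htI)
      rw [Real.dist_eq] at h1
      have h1 := (abs_lt.1 h1).2
      set P := ∫ s in (0:ℝ)..t, g s * f s with hP
      have hP0 : 0 ≤ P := intervalIntegral.integral_nonneg htI.1 (fun t _ => gf0 t)
      have h4 : (∫ s in x..t, g s * f s) ≤ ∫ s in x..t, g s * P := by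
        apply intervalIntegral.integral_mono_on hxt.le (sub hgf x hxI t htI)
          ((sub hg x hxI t htI).mul_const P)
        intro s hs
        have hsI : s ∈ Set.Icc (0:ℝ) 1 := ⟨hx1.1.trans hs.1, hs.2.trans htI.2⟩
        exact mul_le_mul_of_nonneg_left ((h s hsI).trans (mono hgf gf0 s hsI t htI hs.2)) (hg0 s)
      rw [intervalIntegral.integral_mul_const] at h4
      show P = 0
      nlinarith
  intro t ht
  have := h t ht
  rw [key ht] at this
  exact le_antisymm this (hf0 t)

lemma aux_unique {E : Type*} [NormedAddCommGroup E] [NormedSpace ℝ E]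
    (g : ℝ → ℝ) (hg0 : ∀ t, 0 ≤ g t) (hg : IntervalIntegrable g volume 0 1)
    (x : E) (y₁ y₂ F₁ F₂ : ℝ → E)
    (hF₁ : IntervalIntegrable F₁ volume 0 1) (hF₂ : IntervalIntegrable F₂ volume 0 1)
    (h₁ : ∀ t ∈ Set.Icc (0:ℝ) 1, y₁ t = x + ∫ s in (0:ℝ)..t, F₁ s)
    (h₂ : ∀ t ∈ Set.Icc (0:ℝ) 1, y₂ t = x + ∫ s in (0:ℝ)..t, F₂ s)
    (hL : ∀ t, ‖F₁ t - F₂ t‖ ≤ g t * ‖y₁ t - y₂ t‖) :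
    ∀ t ∈ Set.Icc (0:ℝ) 1, y₁ t = y₂ t := by
  have cont : ∀ {k y : ℝ → E}, IntervalIntegrable k volume 0 1 →
      (∀ t ∈ Set.Icc (0:ℝ) 1, y t = x + ∫ s in (0:ℝ)..t, k s) →
      ContinuousOn y (Set.uIcc 0 1) := by
    intro k y hk hy
    have := intervalIntegral.continuousOn_primitive_interval' hk (a := 0) (by simp)
    refine (continuousOn_const (c := x)).add this |>.congr ?_
    intro t ht
    rw [Set.uIcc_of_le zero_le_one] at ht
    exact hy t ht
  have hgf : IntervalIntegrable (fun s => g s * ‖y₁ s - y₂ s‖) volume 0 1 :=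
    hg.mul_continuousOn (((cont hF₁ h₁).sub (cont hF₂ h₂)).norm)
  have := aux_gronwall (fun t => ‖y₁ t - y₂ t‖) g hg0 (fun _ => norm_nonneg _) hg hgf ?_
  · intro t ht
    exact sub_eq_zero.1 (norm_eq_zero.1 (this t ht))
  · intro t ht
    have ss : Set.uIcc 0 t ⊆ Set.uIcc (0:ℝ) 1 := by
      rw [Set.uIcc_of_le zero_le_one, Set.uIcc_of_le ht.1]
      exact Set.Icc_subset_Icc le_rfl ht.2
    show ‖y₁ t - y₂ t‖ ≤ _
    rw [h₁ t ht, h₂ t ht, add_sub_add_left_eq_sub, ← intervalIntegral.integral_sub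
      (hF₁.mono_set ss) (hF₂.mono_set ss)]
    exact intervalIntegral.norm_integral_le_of_norm_le ht.1 (Filter.Eventually.of_forall (fun s _ => hL s))
      (hgf.mono_set ss)

/-- integrability of the right-hand side, from the equation itself -/
lemma aux_int {E : Type*} [NormedAddCommGroup E] [NormedSpace ℝ E]
    (g : ℝ → ℝ) (hg : IntervalIntegrable g volume 0 1)
    (x : E) (y : ℝ → E) (K : ℝ → E → E)
    (hK : ∀ t x, ‖K t x‖ ≤ g t)
    (hm : AEStronglyMeasurable (fun s => K s x) volume)
    (h : ∀ t ∈ Set.Icc (0:ℝ) 1, y t = x + ∫ s in (0:ℝ)..t, K s (y s)) :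
    IntervalIntegrable (fun s => K s (y s)) volume 0 1 := by
  set F := fun s => K s (y s) with hF
  have dom : ∀ S ⊆ Set.Ioc (0:ℝ) 1, AEStronglyMeasurable F (volume.restrict S) →
      IntegrableOn F S := by
    intro S hS hmS
    rw [intervalIntegrable_iff_integrableOn_Ioc_of_le zero_le_one] at hg
    exact (hg.mono_set hS).mono' hmS (Filter.Eventually.of_forall (fun s => hK _ _))
  let A := {t : ℝ | t ∈ Set.Icc (0:ℝ) 1 ∧ IntegrableOn F (Set.Ioc 0 t)}
  have h0 : (0:ℝ) ∈ A := by simp [A]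
  have hbd : BddAbove A := ⟨1, fun t ht => ht.1.2⟩
  set T := sSup A
  have hT0 : 0 ≤ T := le_csSup hbd h0
  have hT1 : T ≤ 1 := csSup_le ⟨0, h0⟩ (fun t ht => ht.1.2)
  obtain ⟨a, -, ha, haA⟩ := exists_seq_tendsto_sSup ⟨0, h0⟩ hbd
  have hU : IntegrableOn F (⋃ n, Set.Ioc 0 (a n)) := by
    apply dom
    · exact Set.iUnion_subset fun n => Set.Ioc_subset_Ioc le_rfl (haA n).1.2
    · rw [aestronglyMeasurable_iUnion_iff]
      exact fun n => (haA n).2.1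
  have hIoo : Set.Ioo 0 T ⊆ ⋃ n, Set.Ioc 0 (a n) := by
    intro s hs
    obtain ⟨n, hn⟩ := (ha.eventually (lt_mem_nhds hs.2)).exists
    exact Set.mem_iUnion.2 ⟨n, hs.1, hn.le⟩
  have hTI : IntegrableOn F (Set.Ioc 0 T) := (integrableOn_Ioc_iff_integrableOn_Ioo (by finiteness)).2 (hU.mono_set hIoo)
  have hrest : AEStronglyMeasurable F (volume.restrict (Set.Ioc T 1)) := by
    refine hm.restrict.congr ?_
    filter_upwards [ae_restrict_mem measurableSet_Ioc] with s hs
    have hsI : s ∈ Set.Icc (0:ℝ) 1 := ⟨hT0.trans hs.1.le, hs.2⟩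
    have : y s = x := by
      rw [h s hsI, intervalIntegral.integral_undef, add_zero]
      rw [intervalIntegrable_iff_integrableOn_Ioc_of_le hsI.1]
      intro hi
      exact absurd (le_csSup hbd (show s ∈ A from ⟨hsI, hi⟩)) (not_le.2 hs.1)
    simp only [hF, this]
  rw [intervalIntegrable_iff_integrableOn_Ioc_of_le zero_le_one, ← Set.Ioc_union_Ioc_eq_Ioc hT0 hT1]
  exact hTI.union (dom _ (Set.Ioc_subset_Ioc hT0 le_rfl) hrest)

lemma aux_concat {E : Type*} [NormedAddCommGroup E] [NormedSpace ℝ E]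
    (a b : ℝ → E) (ha : IntervalIntegrable a volume 0 1) (hb : IntervalIntegrable b volume 0 1)
    (k : ℝ → E) (hk : ∀ t, k t = if t ≤ 1/2 then a (2*t) else b (2*t-1)) :
    IntervalIntegrable k volume 0 1 ∧
    (∀ t ∈ Set.Icc (0:ℝ) (1/2), (2:ℝ) • ∫ s in (0:ℝ)..t, k s = ∫ s in (0:ℝ)..(2*t), a s) ∧
    (∀ t ∈ Set.Icc (1/2:ℝ) 1, (2:ℝ) • ∫ s in (0:ℝ)..t, k s =
      (∫ s in (0:ℝ)..1, a s) + ∫ s in (0:ℝ)..(2*t-1), b s) := by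
  have ha2 : IntervalIntegrable (fun t => a (2*t)) volume 0 (1/2) := by
    simpa using ha.comp_mul_left (c := 2)
  have hb2 : IntervalIntegrable (fun t => b (2*t-1)) volume (1/2) 1 := by
    have := (hb.comp_sub_right 1).comp_mul_left (c := 2)
    norm_num at this ⊢
    exact this
  have e1 : ∀ t, 0 ≤ t → t ≤ 1/2 → Set.EqOn (fun t => a (2*t)) k (Set.uIoc 0 t) := by
    intro t h0 ht s hs
    rw [Set.uIoc_of_le h0] at hs
    rw [hk, if_pos (hs.2.trans ht)]
  have e2 : ∀ t, 1/2 ≤ t → Set.EqOn (fun t => b (2*t-1)) k (Set.uIoc (1/2) t) := by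
    intro t ht s hs
    rw [Set.uIoc_of_le ht] at hs
    rw [hk, if_neg (not_le.2 hs.1)]
  have k1 : IntervalIntegrable k volume 0 (1/2) := ha2.congr (e1 _ (by norm_num) le_rfl)
  have k2 : IntervalIntegrable k volume (1/2) 1 := hb2.congr (e2 _ (by norm_num))
  have i1 : ∀ t ∈ Set.Icc (0:ℝ) (1/2), (2:ℝ) • ∫ s in (0:ℝ)..t, k s = ∫ s in (0:ℝ)..(2*t), a s := by
    intro t ht
    rw [← intervalIntegral.integral_congr_ae (Filter.Eventually.of_forall (e1 t ht.1 ht.2)),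
      intervalIntegral.smul_integral_comp_mul_left]
    simp
  refine ⟨k1.trans k2, i1, ?_⟩
  intro t ht
  have k2t : IntervalIntegrable k volume (1/2) t := by
    apply k2.mono_set
    rw [Set.uIcc_of_le ht.1, Set.uIcc_of_le (by norm_num)]
    exact Set.Icc_subset_Icc le_rfl ht.2
  rw [← intervalIntegral.integral_add_adjacent_intervals k1 k2t, smul_add,
    i1 (1/2) (by norm_num),
    ← intervalIntegral.integral_congr_ae (Filter.Eventually.of_forall (e2 t ht.1)),
    intervalIntegral.smul_integral_comp_mul_sub]
  norm_num


/-- The set `G_H` of time-1 flows of vector fields `u ∈ L²([0,1],H)`, for an admissible space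
`H` of vector fields on `ℝ^d`, is a group: it is closed under composition and under inversion.
Here `Φ u` denotes the flow of the time-dependent vector field `ι ∘ u`. -/
theorem flow_group_closed {d : ℕ} (hd : 1 ≤ d)
    {H : Type*} [NormedAddCommGroup H] [InnerProductSpace ℝ H] [CompleteSpace H]
    [MeasurableSpace H] [BorelSpace H]
    (ι : H →ₗ[ℝ] (EuclideanSpace ℝ (Fin d) → EuclideanSpace ℝ (Fin d)))
    (hι : Function.Injective ι)
    (C : ℝ) (hCpos : 0 < C)
    (hadm : ∀ h : H, ContDiff ℝ 1 (ι h) ∧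
      ∀ x, ‖ι h x‖ + ‖fderiv ℝ (ι h) x‖ ≤ C * ‖h‖)
    (Φ : (ℝ → H) → ℝ → EuclideanSpace ℝ (Fin d) → EuclideanSpace ℝ (Fin d))
    (hΦ : ∀ u : ℝ → H, Measurable u →
      IntegrableOn (fun t => ‖u t‖ ^ 2) (Set.Icc (0:ℝ) 1) →
      (∀ t ∈ Set.Icc (0:ℝ) 1, ∀ x, Φ u t x = x + ∫ s in (0:ℝ)..t, ι (u s) (Φ u s x)) ∧
        ∀ t ∈ Set.Icc (0:ℝ) 1, Function.Bijective (Φ u t)) :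
    ∀ u v : ℝ → H, Measurable u → IntegrableOn (fun t => ‖u t‖ ^ 2) (Set.Icc (0:ℝ) 1) →
      Measurable v → IntegrableOn (fun t => ‖v t‖ ^ 2) (Set.Icc (0:ℝ) 1) →
      (∃ w : ℝ → H, Measurable w ∧ IntegrableOn (fun t => ‖w t‖ ^ 2) (Set.Icc (0:ℝ) 1) ∧
        Φ w 1 = Φ u 1 ∘ Φ v 1) ∧
      (∃ w' : ℝ → H, Measurable w' ∧ IntegrableOn (fun t => ‖w' t‖ ^ 2) (Set.Icc (0:ℝ) 1) ∧
        Function.LeftInverse (Φ w' 1) (Φ u 1) ∧ Function.RightInverse (Φ w' 1) (Φ u 1)) := by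
  have hLip : ∀ h x y, ‖ι h x - ι h y‖ ≤ C * ‖h‖ * ‖x - y‖ := by
    intro h x y
    refine Convex.norm_image_sub_le_of_norm_fderiv_le (𝕜 := ℝ) (s := Set.univ)
      (fun z _ => ((hadm h).1.differentiable one_ne_zero) z) (fun z _ => ?_) convex_univ trivial trivial
    have := (hadm h).2 z
    linarith [norm_nonneg (ι h z)]
  have hB : ∀ h x, ‖ι h x‖ ≤ C * ‖h‖ := by
    intro h x
    have := (hadm h).2 x
    linarith [norm_nonneg (fderiv ℝ (ι h) x)]
  have hmeas : ∀ x, Measurable (fun h => ι h x) := by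
    intro x
    let L : H →ₗ[ℝ] EuclideanSpace ℝ (Fin d) := (LinearMap.proj x).comp ι
    exact (L.mkContinuous C (fun h => hB h x)).continuous.measurable
  have hII : ∀ {k : ℝ → ℝ}, IntegrableOn k (Set.Icc (0:ℝ) 1) ↔ IntervalIntegrable k volume 0 1 := by
    intro k
    rw [intervalIntegrable_iff_integrableOn_Icc_of_le zero_le_one]
  have hg : ∀ u : ℝ → H, Measurable u → IntegrableOn (fun t => ‖u t‖ ^ 2) (Set.Icc (0:ℝ) 1) →
      IntervalIntegrable (fun t => C * ‖u t‖) volume 0 1 := by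
    intro u hu hu2
    apply IntervalIntegrable.const_mul
    apply hII.1
    refine Integrable.mono' (hu2.add (integrable_const (1:ℝ))) hu.norm.aestronglyMeasurable
      (Filter.Eventually.of_forall fun t => ?_)
    simp only [norm_norm, Pi.add_apply]
    nlinarith [sq_nonneg (‖u t‖ - 1), norm_nonneg (u t)]
  have hint : ∀ u : ℝ → H, Measurable u → IntegrableOn (fun t => ‖u t‖ ^ 2) (Set.Icc (0:ℝ) 1) →
      ∀ x, IntervalIntegrable (fun s => ι (u s) (Φ u s x)) volume 0 1 := by
    intro u hu hu2 x
    exact aux_int _ (hg u hu hu2) x (fun s => Φ u s x) (fun s y => ι (u s) y) (fun t x => hB _ _)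
      ((hmeas x).comp hu).aestronglyMeasurable (fun t ht => (hΦ u hu hu2).1 t ht x)
  have huniq : ∀ u : ℝ → H, Measurable u → IntegrableOn (fun t => ‖u t‖ ^ 2) (Set.Icc (0:ℝ) 1) →
      ∀ x (z : ℝ → EuclideanSpace ℝ (Fin d)), IntervalIntegrable (fun s => ι (u s) (z s)) volume 0 1 →
      (∀ t ∈ Set.Icc (0:ℝ) 1, z t = x + ∫ s in (0:ℝ)..t, ι (u s) (z s)) → Φ u 1 x = z 1 := by
    intro u hu hu2 x z hz hz2
    exact aux_unique _ (fun t => by positivity) (hg u hu hu2) x (fun s => Φ u s x) z _ _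
      (hint u hu hu2 x) hz (fun t ht => (hΦ u hu hu2).1 t ht x) hz2 (fun t => hLip _ _ _) 1 (by simp)
  have hzero : ∀ u : ℝ → H, Measurable u → IntegrableOn (fun t => ‖u t‖ ^ 2) (Set.Icc (0:ℝ) 1) →
      ∀ x, Φ u 0 x = x := by
    intro u hu hu2 x
    simpa using (hΦ u hu hu2).1 0 (by simp) x
  intro u v hu hu2 hv hv2
  constructor
  · let w : ℝ → H := fun t => if t ≤ 1/2 then (2:ℝ) • v (2*t) else (2:ℝ) • u (2*t-1)
    have hw : Measurable w := by
      apply Measurable.ite measurableSet_Iic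
      · exact (hv.comp (measurable_id.const_mul 2)).const_smul (2:ℝ)
      · exact (hu.comp ((measurable_id.const_mul 2).sub_const 1)).const_smul (2:ℝ)
    have hw2 : IntegrableOn (fun t => ‖w t‖ ^ 2) (Set.Icc (0:ℝ) 1) := by
      rw [hII]
      refine (aux_concat (fun t => 4 * ‖v t‖^2) (fun t => 4 * ‖u t‖^2) ((hII.1 hv2).const_mul 4)
        ((hII.1 hu2).const_mul 4) _ ?_).1
      intro t
      simp only [w]
      split_ifs <;> simp only [norm_smul, Real.norm_ofNat] <;> ring
    refine ⟨w, hw, hw2, ?_⟩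
    funext x
    let z : ℝ → EuclideanSpace ℝ (Fin d) := fun t => if t ≤ 1/2 then Φ v (2*t) x else
      Φ u (2*t-1) (Φ v 1 x)
    let k : ℝ → EuclideanSpace ℝ (Fin d) := fun t => if t ≤ 1/2 then ι (v (2*t)) (Φ v (2*t) x) else
      ι (u (2*t-1)) (Φ u (2*t-1) (Φ v 1 x))
    have hF : (fun s => ι (w s) (z s)) = fun s => (2:ℝ) • k s := by
      funext s
      simp only [w, z, k]
      split_ifs <;> simp
    obtain ⟨c1, c2, c3⟩ := aux_concat _ _ (hint v hv hv2 x) (hint u hu hu2 (Φ v 1 x)) k (fun t => rfl)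
    have := huniq w hw hw2 x z (by rw [hF]; exact c1.smul (2:ℝ)) ?_
    · rw [this]
      simp only [z, Function.comp]
      norm_num
    · intro t ht
      rw [hF, intervalIntegral.integral_smul]
      by_cases h : t ≤ 1/2
      · rw [c2 t ⟨ht.1, h⟩]
        simp only [z, if_pos h]
        exact (hΦ v hv hv2).1 (2*t) ⟨by linarith [ht.1], by linarith⟩ x
      · have h' := not_le.1 h
        rw [c3 t ⟨h'.le, ht.2⟩, ← add_assoc, ← (hΦ v hv hv2).1 1 (by simp) x]
        simp only [z, if_neg h]
        exact (hΦ u hu hu2).1 (2*t-1) ⟨by linarith, by linarith [ht.2]⟩ _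
  · let w : ℝ → H := fun t => - u (1 - t)
    have hw : Measurable w := (hu.comp (measurable_id.const_sub 1)).neg
    have hw2 : IntegrableOn (fun t => ‖w t‖ ^ 2) (Set.Icc (0:ℝ) 1) := by
      rw [hII] at hu2 ⊢
      simpa [w] using (hu2.comp_sub_left 1).symm
    have hl : Function.LeftInverse (Φ w 1) (Φ u 1) := by
      intro x
      have hF : (fun s => ι (w s) (Φ u (1 - s) x)) = fun s => -(ι (u (1-s)) (Φ u (1-s) x)) := by
        funext s
        simp [w]
      have hi := hint u hu hu2 x
      have := huniq w hw hw2 (Φ u 1 x) (fun s => Φ u (1 - s) x) ?_ ?_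
      · rw [this]
        simp [hzero u hu hu2]
      · rw [hF]
        have h5 := (hi.comp_sub_left 1).symm.neg
        rw [sub_self, sub_zero] at h5
        exact h5
      · intro t ht
        have ht' : 1 - t ∈ Set.Icc (0:ℝ) 1 := ⟨by linarith [ht.2], by linarith [ht.1]⟩
        rw [hF, intervalIntegral.integral_neg,
          intervalIntegral.integral_comp_sub_left (fun s => ι (u s) (Φ u s x)) 1,
          (hΦ u hu hu2).1 1 (by simp) x, (hΦ u hu hu2).1 (1-t) ht' x, sub_zero,
          ← intervalIntegral.integral_add_adjacent_intervals (b := 1 - t) (a := 0) (c := 1)]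
        · abel
        · apply hi.mono_set
          rw [Set.uIcc_of_le zero_le_one]
          exact Set.uIcc_subset_Icc (by simp) ht'
        · apply hi.mono_set
          rw [Set.uIcc_of_le zero_le_one]
          exact Set.uIcc_subset_Icc ht' (by simp)
    refine ⟨w, hw, hw2, hl, ?_⟩
    exact hl.rightInverse_of_surjective ((hΦ u hu hu2).2 1 (by simp)).2
end
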